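/- Let A be an n-by-n complex matrix such that 0 lies on the boundary of the numerical range W(A). Then d(A) ≤ dim span{x ∈ ℂ^n : ⟨Ax, x⟩ = 0}. Moreover, equality holds if and only if 0 is an extreme point of W(A) (i.e., 0 ∈ W(A) and 0 cannot be written as tλ₁ + (1−t)λ₂ with λ₁, λ₂ ∈ W(A) both nonzero and 0 < t < 1). -/

import Mathlib

open Matrix Polynomial

noncomputable def zdi {m : Type*} [Fintype m] (A : Matrix m m ℂ) : ℕ :=
  sSup {k : ℕ | ∃ V : Matrix m (Fin k) ℂ, Vᴴ * V = 1 ∧ Vᴴ * A * V = 0}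

noncomputable def matRe {m : Type*} (A : Matrix m m ℂ) : Matrix m m ℂ :=
  (2⁻¹ : ℂ) • (A + Aᴴ)

noncomputable def iNonneg {m : Type*} [Fintype m] [DecidableEq m] (M : Matrix m m ℂ) : ℕ :=
  if hM : M.IsHermitian then (Finset.univ.filter fun i => 0 ≤ hM.eigenvalues i).card else 0

def numRange {m : Type*} [Fintype m] (A : Matrix m m ℂ) : Set ℂ :=
  {z | ∃ x : m → ℂ, star x ⬝ᵥ x = 1 ∧ star x ⬝ᵥ A.mulVec x = z}

noncomputable def arg2pi (z : ℂ) : ℝ :=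
  if 0 ≤ Complex.arg z then Complex.arg z else Complex.arg z + 2 * Real.pi

def UnitSim {m : Type*} [Fintype m] [DecidableEq m] (A B : Matrix m m ℂ) : Prop :=
  ∃ U ∈ Matrix.unitaryGroup m ℂ, Uᴴ * A * U = B

def UnitSimG {m l : Type*} [Fintype m] [DecidableEq m] [Fintype l] [DecidableEq l]
    (A : Matrix m m ℂ) (B : Matrix l l ℂ) : Prop :=
  ∃ e : m ≃ l, UnitSim (Matrix.reindex e e A) B

def superMat (n : ℕ) (w : ℕ → ℂ) : Matrix (Fin n) (Fin n) ℂ :=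
  Matrix.of fun i j => if (j : ℕ) = (i : ℕ) + 1 then w (i : ℕ) else 0

def cycMat (n : ℕ) (w : ℕ → ℂ) : Matrix (Fin n) (Fin n) ℂ :=
  Matrix.of fun i j => if (j : ℕ) = ((i : ℕ) + 1) % n then w (i : ℕ) else 0

/-!
`d(A)` is the largest dimension of a subspace on which the form `q x = ⟨Ax, x⟩` vanishes. Such a
subspace lies in the span `S` of the isotropic vectors, so `d(A) ≤ dim S`, with equality if and only
if `q` vanishes on `S`.

If `q y = -q x ≠ 0`, then for a suitable phase `w` the value `q (x + s w y)` is a fixed complex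
number times a real quadratic in `s ∈ ℝ` with two distinct roots; subtracting the two isotropic
vectors puts `y` in `S`, so `q` does not vanish on `S`. Conversely, if `x` and `y` are isotropic and
`x + y` is not, the parallelogram identity gives `q (x - y) = -q (x + y) ≠ 0`. Up to rescaling the
vectors, a pair with `q y = -q x ≠ 0` is a segment with endpoints in `W(A) ∖ {0}` passing
through `0`.
-/

open ComplexConjugate

section SesquilinearForm

lemma exists_norm_eq_one_mul_add_conj_mul_eq_ofReal (u v : ℂ) :
    ∃ w : ℂ, ‖w‖ = 1 ∧ ∃ r : ℝ, w * u + conj w * v = r := by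
  obtain ⟨w, hw, hwr⟩ := Complex.exists_norm_eq_mul_self (u - conj v)
  refine ⟨w, hw, ‖u - conj v‖ + 2 * (w * conj v).re, ?_⟩
  have h := Complex.add_conj (w * conj v)
  rw [map_mul, Complex.conj_conj] at h
  push_cast at h ⊢
  linear_combination h - hwr

lemma exists_ne_sq_eq_mul_add_one (r : ℝ) :
    ∃ s t : ℝ, s ≠ t ∧ s ^ 2 = r * s + 1 ∧ t ^ 2 = r * t + 1 := by
  have hpos : 0 < r ^ 2 + 4 := by positivity
  have hsq : √(r ^ 2 + 4) ^ 2 = r ^ 2 + 4 := Real.sq_sqrt hpos.le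
  refine ⟨(r + √(r ^ 2 + 4)) / 2, (r - √(r ^ 2 + 4)) / 2, ?_, ?_, ?_⟩
  · linarith [Real.sqrt_pos.mpr hpos]
  · linear_combination hsq / 4
  · linear_combination hsq / 4

variable {E : Type*} [AddCommGroup E] [Module ℂ E] {B : E →ₗ⋆[ℂ] E →ₗ[ℂ] ℂ} {x y : E}
  {R : Submodule ℂ E}

/-- A subspace on which the form `x ↦ B x x` vanishes. -/
def IsTotallyIsotropic (B : E →ₗ⋆[ℂ] E →ₗ[ℂ] ℂ) (R : Submodule ℂ E) : Prop :=
  ∀ x ∈ R, B x x = 0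

/-- The span of the isotropic vectors of `B`, which need not itself be totally isotropic. -/
def isotropicSpan (B : E →ₗ⋆[ℂ] E →ₗ[ℂ] ℂ) : Submodule ℂ E :=
  Submodule.span ℂ {x | B x x = 0}

lemma IsTotallyIsotropic.apply_eq_zero (hR : IsTotallyIsotropic B R) (hx : x ∈ R) (hy : y ∈ R) :
    B x y = 0 := by
  have hadd : B x y + B y x = 0 := by
    simpa [hR x hx, hR y hy, add_comm] using hR (x + y) (R.add_mem hx hy)
  have hadd_I : Complex.I * (B x y - B y x) = 0 := by
    have h := hR (x + Complex.I • y) (R.add_mem hx (R.smul_mem _ hy))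
    simp only [map_add, LinearMap.map_smulₛₗ, map_smul, LinearMap.add_apply, LinearMap.smul_apply,
      Complex.conj_I, smul_eq_mul, hR x hx, hR y hy] at h
    linear_combination h
  have hsub := (mul_eq_zero.mp hadd_I).resolve_left Complex.I_ne_zero
  linear_combination (hadd + hsub) / 2

lemma IsTotallyIsotropic.le_isotropicSpan (hR : IsTotallyIsotropic B R) : R ≤ isotropicSpan B :=
  fun x hx => Submodule.subset_span (hR x hx)

lemma apply_smul_smul_self (B : E →ₗ⋆[ℂ] E →ₗ[ℂ] ℂ) (a : ℂ) (x : E) :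
    B (a • x) (a • x) = (‖a‖ : ℂ) ^ 2 * B x x := by
  simp [← mul_assoc, ← Complex.mul_conj']

lemma exists_ne_apply_add_smul_self_eq_zero (hx : B x x ≠ 0) (hy : B y y = -B x x) :
    ∃ a b : ℂ, a ≠ b ∧ B (x + a • y) (x + a • y) = 0 ∧ B (x + b • y) (x + b • y) = 0 := by
  obtain ⟨w, hw, r, hr⟩ :=
    exists_norm_eq_one_mul_add_conj_mul_eq_ofReal (B x y / B x x) (B y x / B x x)
  have hcross : w * B x y + conj w * B y x = r * B x x := by
    rw [← hr]
    field_simp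
  have hunit : conj w * w = 1 := by simp [Complex.conj_mul', hw]
  have isotropic {s : ℝ} (hs : s ^ 2 = r * s + 1) :
      B (x + (s * w) • y) (x + (s * w) • y) = 0 := by
    have hs' : (s : ℂ) ^ 2 = r * s + 1 := mod_cast hs
    simp only [map_add, LinearMap.map_smulₛₗ, map_smul, LinearMap.add_apply, LinearMap.smul_apply,
      map_mul, Complex.conj_ofReal, smul_eq_mul, hy]
    linear_combination s * hcross - s ^ 2 * B x x * hunit - B x x * hs'
  obtain ⟨s, t, hst, hs, ht⟩ := exists_ne_sq_eq_mul_add_one r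
  have hw0 : w ≠ 0 := norm_ne_zero_iff.mp (by simp [hw])
  exact ⟨s * w, t * w, by simpa [hw0] using hst, isotropic hs, isotropic ht⟩

lemma mem_isotropicSpan_of_apply_self_eq_neg (hx : B x x ≠ 0) (hy : B y y = -B x x) :
    y ∈ isotropicSpan B := by
  obtain ⟨a, b, hab, ha, hb⟩ := exists_ne_apply_add_smul_self_eq_zero hx hy
  have hsub : (a - b) • y ∈ isotropicSpan B := by
    have h := (isotropicSpan B).sub_mem (Submodule.subset_span ha) (Submodule.subset_span hb)
    rwa [add_sub_add_left_eq_sub, ← sub_smul] at h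
  exact ((isotropicSpan B).smul_mem_iff (sub_ne_zero.mpr hab)).mp hsub

lemma isTotallyIsotropic_isotropicSpan_iff :
    IsTotallyIsotropic B (isotropicSpan B) ↔ ¬ ∃ x y, B x x ≠ 0 ∧ B y y = -B x x := by
  refine ⟨fun h ⟨x, y, hx, hy⟩ => hx ?_, fun h z hz => ?_⟩
  · rw [← neg_eq_zero, ← hy]
    exact h y (mem_isotropicSpan_of_apply_self_eq_neg hx hy)
  · induction hz using Submodule.span_induction with
    | mem _ hz => exact hz
    | zero => simp
    | smul a z _ hz => rw [apply_smul_smul_self, hz, mul_zero]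
    | add x y _ _ hx hy =>
      have parallelogram :
          B (x + y) (x + y) + B (x - y) (x - y) = 2 * (B x x + B y y) := by
        simp only [map_add, map_sub, LinearMap.add_apply, LinearMap.sub_apply]
        ring
      rw [hx, hy, add_zero, mul_zero] at parallelogram
      by_contra hne
      exact h ⟨x + y, x - y, hne, eq_neg_of_add_eq_zero_right parallelogram⟩

end SesquilinearForm

section Matrix

variable {m ι : Type*} [Fintype m]

/-- The sesquilinear form `(x, y) ↦ ⟨Ay, x⟩` of a square matrix, conjugate-linear in the first
variable; its diagonal values are the `⟨Ax, x⟩` of the numerical range. -/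
def sesqForm (A : Matrix m m ℂ) : (m → ℂ) →ₗ⋆[ℂ] (m → ℂ) →ₗ[ℂ] ℂ :=
  LinearMap.mk₂'ₛₗ (starRingEnd ℂ) (RingHom.id ℂ) (fun x y => star x ⬝ᵥ A *ᵥ y)
    (fun _ _ _ => by rw [star_add, add_dotProduct])
    (fun _ _ _ => by rw [star_smul, smul_dotProduct, starRingEnd_apply])
    (fun _ _ _ => by rw [mulVec_add, dotProduct_add])
    (fun _ _ _ => by rw [mulVec_smul, dotProduct_smul, RingHom.id_apply])

lemma sesqForm_apply (A : Matrix m m ℂ) (x y : m → ℂ) : sesqForm A x y = star x ⬝ᵥ A *ᵥ y :=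
  rfl

lemma finrank_range_mulVecLin_of_mul_eq_one {K : Type*} [CommRing K] [Nontrivial K]
    [Fintype ι] [DecidableEq ι] {W : Matrix ι m K} {V : Matrix m ι K} (h : W * V = 1) :
    Module.finrank K (LinearMap.range V.mulVecLin) = Fintype.card ι := by
  refine V.rank_le_card_width.antisymm ?_
  calc
    Fintype.card ι = (W * V).rank := by rw [h, Matrix.rank_one]
    _ ≤ V.rank := Matrix.rank_mul_le_right W V

lemma exists_conjTranspose_mul_self_eq_one_range_eq {𝕜 : Type*} [RCLike 𝕜]
    (R : Submodule 𝕜 (m → 𝕜)) :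
    ∃ V : Matrix m (Fin (Module.finrank 𝕜 R)) 𝕜, Vᴴ * V = 1 ∧ LinearMap.range V.mulVecLin = R := by
  let e := WithLp.linearEquiv 2 𝕜 (m → 𝕜)
  let R' : Submodule 𝕜 (EuclideanSpace 𝕜 m) := R.map e.symm.toLinearMap
  have hR' : Module.finrank 𝕜 R' = Module.finrank 𝕜 R := e.symm.finrank_map_eq R
  let b := (stdOrthonormalBasis 𝕜 R').reindex (finCongr hR')
  let V : Matrix m (Fin (Module.finrank 𝕜 R)) 𝕜 := Matrix.of fun i j => e (b j) i
  have hV : Vᴴ * V = 1 := by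
    ext i j
    rw [Matrix.one_apply, ← orthonormal_iff_ite.mp b.orthonormal i j, Submodule.coe_inner,
      EuclideanSpace.inner_eq_star_dotProduct, dotProduct_comm]
    rfl
  refine ⟨V, hV, Submodule.eq_of_le_of_finrank_eq ?_ ?_⟩
  · rw [Matrix.range_mulVecLin, Submodule.span_le]
    rintro _ ⟨j, rfl⟩
    obtain ⟨x, hx, hxj⟩ := (b j).2
    have hcol : V.col j = x := congrArg e hxj.symm
    exact hcol ▸ hx
  · rw [finrank_range_mulVecLin_of_mul_eq_one hV, Fintype.card_fin]

lemma conjTranspose_mul_mul_eq_zero_iff [Fintype ι] {A : Matrix m m ℂ} {V : Matrix m ι ℂ} :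
    Vᴴ * A * V = 0 ↔ IsTotallyIsotropic (sesqForm A) (LinearMap.range V.mulVecLin) := by
  have pullback (c d : ι → ℂ) :
      sesqForm A (V *ᵥ c) (V *ᵥ d) = star c ⬝ᵥ (Vᴴ * A * V) *ᵥ d := by
    rw [sesqForm_apply, star_mulVec, ← dotProduct_mulVec, mulVec_mulVec, mulVec_mulVec]
  refine ⟨?_, fun h => ?_⟩
  · rintro h _ ⟨c, rfl⟩
    rw [mulVecLin_apply, pullback, h, zero_mulVec, dotProduct_zero]
  · classical
    ext i j
    have mem_range (c : ι → ℂ) : V *ᵥ c ∈ LinearMap.range V.mulVecLin := ⟨c, rfl⟩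
    have hij := pullback (Pi.single i 1) (Pi.single j 1)
    rw [h.apply_eq_zero (mem_range _) (mem_range _)] at hij
    simpa using hij.symm

lemma exists_zero_compression_iff {A : Matrix m m ℂ} {k : ℕ} :
    (∃ V : Matrix m (Fin k) ℂ, Vᴴ * V = 1 ∧ Vᴴ * A * V = 0) ↔
      ∃ R, IsTotallyIsotropic (sesqForm A) R ∧ Module.finrank ℂ R = k := by
  constructor
  · rintro ⟨V, hV, hVA⟩
    refine ⟨_, conjTranspose_mul_mul_eq_zero_iff.mp hVA, ?_⟩
    rw [finrank_range_mulVecLin_of_mul_eq_one hV, Fintype.card_fin]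
  · rintro ⟨R, hR, rfl⟩
    obtain ⟨V, hV, hrange⟩ := exists_conjTranspose_mul_self_eq_one_range_eq R
    exact ⟨V, hV, conjTranspose_mul_mul_eq_zero_iff.mpr (hrange.symm ▸ hR)⟩

lemma isGreatest_zdi (A : Matrix m m ℂ) :
    IsGreatest {k | ∃ R, IsTotallyIsotropic (sesqForm A) R ∧ Module.finrank ℂ R = k} (zdi A) := by
  simp only [zdi, exists_zero_compression_iff]
  have hbdd : BddAbove {k | ∃ R, IsTotallyIsotropic (sesqForm A) R ∧ Module.finrank ℂ R = k} :=
    ⟨Module.finrank ℂ (m → ℂ), by rintro _ ⟨R, -, rfl⟩; exact R.finrank_le⟩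
  have hbot : IsTotallyIsotropic (sesqForm A) ⊥ := by
    rintro x rfl
    simp
  exact ⟨Nat.sSup_mem ⟨0, ⊥, hbot, finrank_bot ℂ _⟩ hbdd, fun k hk => le_csSup hbdd hk⟩

lemma zdi_le_finrank_isotropicSpan (A : Matrix m m ℂ) :
    zdi A ≤ Module.finrank ℂ (isotropicSpan (sesqForm A)) := by
  obtain ⟨R, hR, hdim⟩ := (isGreatest_zdi A).1
  exact hdim ▸ Submodule.finrank_mono hR.le_isotropicSpan

lemma zdi_eq_finrank_isotropicSpan_iff (A : Matrix m m ℂ) :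
    zdi A = Module.finrank ℂ (isotropicSpan (sesqForm A)) ↔
      IsTotallyIsotropic (sesqForm A) (isotropicSpan (sesqForm A)) := by
  refine ⟨fun h => ?_, fun h => ?_⟩
  · obtain ⟨R, hR, hdim⟩ := (isGreatest_zdi A).1
    rwa [← Submodule.eq_of_le_of_finrank_eq hR.le_isotropicSpan (hdim.trans h)]
  · exact (zdi_le_finrank_isotropicSpan A).antisymm ((isGreatest_zdi A).2 ⟨_, h, rfl⟩)

lemma star_dotProduct_self_eq_one_iff {𝕜 : Type*} [RCLike 𝕜] (x : EuclideanSpace 𝕜 m) :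
    star x.ofLp ⬝ᵥ x.ofLp = 1 ↔ ‖x‖ = 1 := by
  rw [dotProduct_comm, ← EuclideanSpace.inner_eq_star_dotProduct, inner_self_eq_norm_sq_to_K]
  norm_cast
  exact pow_eq_one_iff_of_nonneg (norm_nonneg x) two_ne_zero

lemma numRange_eq_image_sphere (A : Matrix m m ℂ) :
    numRange A =
      (fun x : EuclideanSpace ℂ m => sesqForm A x.ofLp x.ofLp) '' Metric.sphere 0 1 := by
  ext z
  constructor
  · rintro ⟨x, hx, rfl⟩
    exact ⟨WithLp.toLp 2 x,
      mem_sphere_zero_iff_norm.mpr ((star_dotProduct_self_eq_one_iff _).mp hx), rfl⟩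
  · rintro ⟨x, hx, rfl⟩
    exact ⟨x.ofLp, (star_dotProduct_self_eq_one_iff x).mpr (mem_sphere_zero_iff_norm.mp hx), rfl⟩

lemma isClosed_numRange (A : Matrix m m ℂ) : IsClosed (numRange A) := by
  rw [numRange_eq_image_sphere]
  simp only [sesqForm_apply]
  exact ((isCompact_sphere 0 1).image (by fun_prop)).isClosed

lemma exists_pos_mul_mem_numRange {A : Matrix m m ℂ} {x : m → ℂ} (hx : x ≠ 0) :
    ∃ p : ℝ, 0 < p ∧ (p : ℂ) * sesqForm A x x ∈ numRange A := by
  have hnorm : 0 < ‖WithLp.toLp 2 x‖ := norm_pos_iff.mpr (by simpa using hx)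
  let a : ℂ := (‖WithLp.toLp 2 x‖ : ℂ)⁻¹
  refine ⟨‖a‖ ^ 2, by simpa [a] using pow_pos hnorm 2, ?_⟩
  rw [numRange_eq_image_sphere]
  refine ⟨a • WithLp.toLp 2 x, ?_, ?_⟩
  · simp [a, norm_smul, hnorm.ne']
  · simpa using apply_smul_smul_self (sesqForm A) a x

lemma zero_mem_segment_numRange_iff (A : Matrix m m ℂ) :
    (∃ (t : ℝ) (l₁ l₂ : ℂ), l₁ ∈ numRange A ∧ l₂ ∈ numRange A ∧ l₁ ≠ 0 ∧ l₂ ≠ 0 ∧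
      0 < t ∧ t < 1 ∧ (0 : ℂ) = (t : ℂ) * l₁ + (1 - (t : ℂ)) * l₂) ↔
      ∃ x y, sesqForm A x x ≠ 0 ∧ sesqForm A y y = -sesqForm A x x := by
  constructor
  · rintro ⟨t, _, _, ⟨x, -, rfl⟩, ⟨y, -, rfl⟩, hx, -, ht₀, ht₁, hzero⟩
    rw [← sesqForm_apply, ← sesqForm_apply] at hzero
    have apply_sqrt_smul {c : ℝ} (hc : 0 ≤ c) (z : m → ℂ) :
        sesqForm A ((√c : ℂ) • z) ((√c : ℂ) • z) = c * sesqForm A z z := by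
      rw [apply_smul_smul_self, Complex.norm_real, Real.norm_of_nonneg (Real.sqrt_nonneg c),
        ← Complex.ofReal_pow, Real.sq_sqrt hc]
    refine ⟨(√t : ℂ) • x, (√(1 - t) : ℂ) • y, ?_, ?_⟩
    · rw [apply_sqrt_smul ht₀.le]
      exact mul_ne_zero (mod_cast ht₀.ne') hx
    · rw [apply_sqrt_smul ht₀.le, apply_sqrt_smul (sub_nonneg.mpr ht₁.le)]
      push_cast
      linear_combination -hzero
  · rintro ⟨x, y, hx, hyx⟩
    have hy : sesqForm A y y ≠ 0 := hyx ▸ neg_ne_zero.mpr hx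
    obtain ⟨p, hp, hpx⟩ := exists_pos_mul_mem_numRange (A := A) (x := x) (by rintro rfl; simp at hx)
    obtain ⟨q, hq, hqy⟩ := exists_pos_mul_mem_numRange (A := A) (x := y) (by rintro rfl; simp at hy)
    have hpq : (p : ℂ) + q ≠ 0 := mod_cast (add_pos hp hq).ne'
    refine ⟨q / (p + q), _, _, hpx, hqy, mul_ne_zero (mod_cast hp.ne') hx,
      mul_ne_zero (mod_cast hq.ne') hy, by positivity, ?_, ?_⟩
    · rw [div_lt_one (by positivity)]
      linarith
    · rw [hyx]
      push_cast
      field_simp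
      ring

theorem zdi_le_finrank_span_of_zero_mem_frontier_general (A : Matrix m m ℂ) :
    zdi A ≤ Module.finrank ℂ (Submodule.span ℂ {x : m → ℂ | star x ⬝ᵥ A.mulVec x = 0}) ∧
    (zdi A = Module.finrank ℂ (Submodule.span ℂ {x : m → ℂ | star x ⬝ᵥ A.mulVec x = 0}) ↔
      ¬ ∃ (t : ℝ) (l₁ l₂ : ℂ), l₁ ∈ numRange A ∧ l₂ ∈ numRange A ∧ l₁ ≠ 0 ∧ l₂ ≠ 0 ∧
        0 < t ∧ t < 1 ∧ (0 : ℂ) = (t : ℂ) * l₁ + (1 - (t : ℂ)) * l₂) := by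
  refine ⟨zdi_le_finrank_isotropicSpan A, ?_⟩
  rw [zero_mem_segment_numRange_iff, ← isTotallyIsotropic_isotropicSpan_iff]
  exact zdi_eq_finrank_isotropicSpan_iff A

end Matrix

/-- Proposition 2.1. -/
theorem zdi_le_finrank_span_of_zero_mem_frontier {n : ℕ} (A : Matrix (Fin n) (Fin n) ℂ)
    (h0 : (0 : ℂ) ∈ frontier (numRange A)) :
    zdi A ≤ Module.finrank ℂ (Submodule.span ℂ {x : Fin n → ℂ | star x ⬝ᵥ A.mulVec x = 0}) ∧
    (zdi A = Module.finrank ℂ (Submodule.span ℂ {x : Fin n → ℂ | star x ⬝ᵥ A.mulVec x = 0}) ↔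
      ((0 : ℂ) ∈ numRange A ∧
        ¬ ∃ (t : ℝ) (l₁ l₂ : ℂ), l₁ ∈ numRange A ∧ l₂ ∈ numRange A ∧ l₁ ≠ 0 ∧ l₂ ≠ 0 ∧
          0 < t ∧ t < 1 ∧ (0 : ℂ) = (t : ℂ) * l₁ + (1 - (t : ℂ)) * l₂)) := by
  rw [and_iff_right ((isClosed_numRange A).frontier_subset h0)]
  exact zdi_le_finrank_span_of_zero_mem_frontier_general A
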